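/- Let G be a finite group acting transitively on a finite nonempty set T, and let Γ be a group acting on G by group automorphisms and on T by permutations, compatibly with the G-action on T. Then the number of Γ-orbits on T is at most the number of Γ-orbits on G: |T/Γ| ≤ |G/Γ|. -/

import Mathlib

/-!
The number of orbits is counted by Burnside's lemma, so it suffices to show `|T^γ| ≤ |G^γ|` for
each `γ`.  This is clear when `T^γ` is empty.  Otherwise fix `t₀ ∈ T^γ` with stabilizer `H`, and
let `A` be the set of `g` with `g • t₀ ∈ T^γ`, equivalently `g⁻¹ * γ(g) ∈ H`.  Since `G` is
transitive, `|A| = |T^γ| * |H|`.  On the other hand the nonempty fibres of `g ↦ g⁻¹ * γ(g)` are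
right cosets of `G^γ`, so `|A| ≤ |H| * |G^γ|` (`card_fixedBy_le`).

Burnside's lemma needs a finite acting group, while `Γ` is arbitrary; `Γ` is therefore replaced by
its image in `Perm G × Perm T`, which has the same orbits (`card_orbits_eq_of_surjective`).
-/

/-- The pointwise inequality behind the theorem: each `γ` has at most as many fixed points on `T`
as on `G`. -/
lemma card_fixedBy_le
    (G T Γ : Type*) [Group G] [Finite G] [Finite T]
    [MulAction G T]
    (htrans : ∀ t t' : T, ∃ g : G, g • t = t')
    [Group Γ] [MulDistribMulAction Γ G] [MulAction Γ T]
    (hcompat : ∀ (γ : Γ) (g : G) (t : T), γ • (g • t) = (γ • g) • (γ • t)) (γ : Γ) :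
    Nat.card (MulAction.fixedBy T γ) ≤ Nat.card (MulAction.fixedBy G γ) := by
  classical
  rcases isEmpty_or_nonempty (MulAction.fixedBy T γ) with hE | ⟨⟨t₀, ht₀⟩⟩
  · simp
  rw [MulAction.mem_fixedBy] at ht₀
  choose s hs using htrans t₀
  let d : G → G := fun g => g⁻¹ * γ • g
  -- a chosen point in each nonempty fibre of `d`
  let r : G → G := fun h => Function.invFun d h
  have hr : ∀ g, d (r (d g)) = d g := fun g => Function.invFun_eq ⟨g, rfl⟩
  have hfix : ∀ g, g * (r (d g))⁻¹ ∈ MulAction.fixedBy G γ := by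
    intro g
    have h1 : (r (d g))⁻¹ * γ • r (d g) = g⁻¹ * γ • g := hr g
    rw [MulAction.mem_fixedBy, smul_mul', smul_inv']
    have h2 : γ • g = g * ((r (d g))⁻¹ * γ • r (d g)) := by rw [h1]; group
    rw [h2]; group
  have hd : ∀ (t : MulAction.fixedBy T γ) (h : MulAction.stabilizer G t₀),
      d (s t * h) ∈ MulAction.stabilizer G t₀ := by
    intro t h
    have e : (s t * (h : G)) • t₀ = t := by rw [mul_smul, h.2, hs]
    have e2 := hcompat γ (s t * (h : G)) t₀
    rw [e, ht₀, t.2] at e2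
    rw [MulAction.mem_stabilizer_iff, mul_smul, ← e2, inv_smul_eq_iff, e]
  let F : MulAction.fixedBy T γ × MulAction.stabilizer G t₀ →
      MulAction.fixedBy G γ × MulAction.stabilizer G t₀ :=
    fun p => (⟨_, hfix (s p.1 * p.2)⟩, ⟨_, hd p.1 p.2⟩)
  have hF : Function.Injective F := by
    rintro ⟨t, h⟩ ⟨t', h'⟩ e
    simp only [F, Prod.mk.injEq, Subtype.mk.injEq] at e
    obtain ⟨e1, e2⟩ := e
    rw [e2] at e1
    have e3 : s t * (h : G) = s t' * h' := mul_right_cancel e1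
    have e4 : (t : T) = t' := by
      have := congrArg (· • t₀) e3
      simpa only [mul_smul, h.2, h'.2, hs, MulAction.mem_stabilizer_iff.1 h.2,
        MulAction.mem_stabilizer_iff.1 h'.2] using this
    rw [e4] at e3
    exact Prod.ext (Subtype.ext e4) (Subtype.ext (mul_left_cancel e3))
  have := Nat.card_le_card_of_injective F hF
  rw [Nat.card_prod, Nat.card_prod] at this
  exact Nat.le_of_mul_le_mul_right this Nat.card_pos

/-- Burnside's lemma as a comparison principle for two actions of one finite group. -/
lemma card_orbits_le_of_fixedBy_le (P X Y : Type*) [Group P] [Finite P] [Finite X] [Finite Y]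
    [MulAction P X] [MulAction P Y]
    (h : ∀ p : P, Nat.card (MulAction.fixedBy X p) ≤ Nat.card (MulAction.fixedBy Y p)) :
    Nat.card (MulAction.orbitRel.Quotient P X) ≤ Nat.card (MulAction.orbitRel.Quotient P Y) := by
  classical
  have := Fintype.ofFinite P
  have := Fintype.ofFinite X
  have := Fintype.ofFinite Y
  have hX := MulAction.sum_card_fixedBy_eq_card_orbits_mul_card_group P X
  have hY := MulAction.sum_card_fixedBy_eq_card_orbits_mul_card_group P Y
  simp only [← Nat.card_eq_fintype_card] at hX hY
  refine Nat.le_of_mul_le_mul_right (c := Nat.card P) ?_ Nat.card_pos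
  rw [← hX, ← hY]
  exact Finset.sum_le_sum fun p _ => h p

lemma card_orbits_eq_of_surjective (Γ P X : Type*) [Group Γ] [Group P]
    [MulAction Γ X] [MulAction P X] (π : Γ → P) (hπ : Function.Surjective π)
    (h : ∀ γ (x : X), π γ • x = γ • x) :
    Nat.card (MulAction.orbitRel.Quotient Γ X) = Nat.card (MulAction.orbitRel.Quotient P X) := by
  have : MulAction.orbitRel Γ X = MulAction.orbitRel P X := by
    ext x y
    simp only [MulAction.orbitRel_apply, MulAction.mem_orbit_iff]
    rw [hπ.exists]
    simp only [h]
  unfold MulAction.orbitRel.Quotient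
  rw [this]


/-- Let `G` be a finite group acting transitively on a finite nonempty set `T`,
and `Γ` a group acting on `G` by group automorphisms and on `T` by
permutations, compatibly with the `G`-action on `T`.  Then the number of
`Γ`-orbits on `T` is at most the number of `Γ`-orbits on `G`. -/
theorem orbit_count_transitive_le
    (G T Γ : Type*) [Group G] [Finite G] [Finite T] [Nonempty T]
    [MulAction G T]
    (htrans : ∀ t t' : T, ∃ g : G, g • t = t')
    [Group Γ] [MulDistribMulAction Γ G] [MulAction Γ T]
    (hcompat : ∀ (γ : Γ) (g : G) (t : T), γ • (g • t) = (γ • g) • (γ • t)) :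
    Nat.card (MulAction.orbitRel.Quotient Γ T)
      ≤ Nat.card (MulAction.orbitRel.Quotient Γ G) := by
  let Φ : Γ →* Equiv.Perm G × Equiv.Perm T :=
    (MulAction.toPermHom Γ G).prod (MulAction.toPermHom Γ T)
  letI : MulAction Φ.range G :=
    MulAction.compHom G ((MonoidHom.fst (Equiv.Perm G) (Equiv.Perm T)).comp Φ.range.subtype)
  letI : MulAction Φ.range T :=
    MulAction.compHom T ((MonoidHom.snd (Equiv.Perm G) (Equiv.Perm T)).comp Φ.range.subtype)
  have hG : ∀ γ (x : G), Φ.rangeRestrict γ • x = γ • x := fun _ _ => rfl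
  have hT : ∀ γ (x : T), Φ.rangeRestrict γ • x = γ • x := fun _ _ => rfl
  rw [card_orbits_eq_of_surjective Γ Φ.range T _ Φ.rangeRestrict_surjective hT,
    card_orbits_eq_of_surjective Γ Φ.range G _ Φ.rangeRestrict_surjective hG]
  refine card_orbits_le_of_fixedBy_le _ _ _ fun p => ?_
  obtain ⟨γ, rfl⟩ := Φ.rangeRestrict_surjective p
  exact card_fixedBy_le G T Γ htrans hcompat γ
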